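/- Let D be a bounded c-John domain in ℝⁿ, n ≥ 2. Let τ, δ ∈ (0,1) and 1 ≤ p < n/δ be given. Then there is a constant C = C(δ, τ, p, n, c) > 0 such that the fractional Sobolev–Poincaré inequality ∫_D |u(x) − u_D|^{np/(n−δp)} dx ≤ C (∫_D ∫_{B(x, τ dist(x,∂D))} |u(x) − u(y)|^p / |x−y|^{n+δp} dy dx)^{n/(n−δp)} holds for every u ∈ L¹(D). -/

import Mathlib

open MeasureTheory Metric Set
open scoped ENNReal NNReal BigOperators

noncomputable section

/-- Euclidean `n`-space. -/
abbrev Eucl (n : ℕ) : Type := EuclideanSpace ℝ (Fin n)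

/-- `D` is a `c`-John domain (bounded or unbounded): an open connected set such that each
pair of points can be joined by a rectifiable curve, parametrized by arc length
(formalized as a `1`-Lipschitz parametrization on `[0, ℓ]`), along which
`dist(γ t, ∂D) ≥ min{t, ℓ - t}/c`. -/
def IsJohnDomain (n : ℕ) (c : ℝ) (D : Set (Eucl n)) : Prop :=
  IsOpen D ∧ IsConnected D ∧
    ∀ x₁ ∈ D, ∀ x₂ ∈ D, ∃ ℓ : ℝ, 0 ≤ ℓ ∧ ∃ γ : ℝ → Eucl n,
      γ 0 = x₁ ∧ γ ℓ = x₂ ∧ (∀ t ∈ Icc (0:ℝ) ℓ, γ t ∈ D) ∧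
      LipschitzOnWith 1 γ (Icc 0 ℓ) ∧
      ∀ t ∈ Icc (0:ℝ) ℓ, min t (ℓ - t) / c ≤ infDist (γ t) (frontier D)

/-- The ball `B(x, τ·dist(x, ∂G))`; by convention, if `∂G = ∅` (i.e. `G = ℝⁿ`)
it is all of `ℝⁿ`. -/
def tauBall (n : ℕ) (τ : ℝ) (G : Set (Eucl n)) (x : Eucl n) : Set (Eucl n) :=
  {y : Eucl n | edist x y < ENNReal.ofReal τ * EMetric.infEdist x (frontier G)}

/-- The fractional kernel `|u x - u y|^p / |x - y|^(n + δp)` as an extended real. -/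
def fracKernel (n : ℕ) (δ p : ℝ) (u : Eucl n → ℝ) (x y : Eucl n) : ℝ≥0∞ :=
  ENNReal.ofReal (|u x - u y| ^ p / dist x y ^ ((n : ℝ) + δ * p))

/-- The `p`-th power of the seminorm `|u|_{W^{δ,p}_τ(G)}`. -/
def fracEnergyTau (n : ℕ) (δ τ p : ℝ) (G : Set (Eucl n)) (u : Eucl n → ℝ) : ℝ≥0∞ :=
  ∫⁻ x in G, ∫⁻ y in tauBall n τ G x, fracKernel n δ p u x y ∂volume ∂volume

/-- The `p`-th power of the seminorm `|u|_{W^{δ,p}(G)}`. -/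
def fracEnergy (n : ℕ) (δ p : ℝ) (G : Set (Eucl n)) (u : Eucl n → ℝ) : ℝ≥0∞ :=
  ∫⁻ x in G, ∫⁻ y in G, fracKernel n δ p u x y ∂volume ∂volume

/-- The fractional `(δ,p)`-capacity of a compact set `K ⊆ G`:
`inf |u|_{W^{δ,p}(G)}^p` over `u ∈ C₀(G)` with `u ≥ 1` on `K`. -/
def fracCap (n : ℕ) (δ p : ℝ) (K G : Set (Eucl n)) : ℝ≥0∞ :=
  ⨅ (u : Eucl n → ℝ) (_ : Continuous u) (_ : HasCompactSupport u) (_ : tsupport u ⊆ G)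
    (_ : ∀ x ∈ K, 1 ≤ u x), fracEnergy n δ p G u

/-- The fractional `(δ,q,p)`-Hardy inequality holds in `G` with constant `C`. -/
def HasFracHardy (n : ℕ) (δ p q C : ℝ) (G : Set (Eucl n)) : Prop :=
  ∀ u : Eucl n → ℝ, Continuous u → HasCompactSupport u → tsupport u ⊆ G →
    (∫⁻ x in G, ENNReal.ofReal
        (|u x| ^ q / infDist x (frontier G) ^ (q * (δ + n * (1/q - 1/p)))) ∂volume)
      ≤ ENNReal.ofReal C * fracEnergy n δ p G u ^ (q / p)

/-- The closed axis-parallel cube with center `z` and half side length `r`. -/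
def cube (n : ℕ) (z : Eucl n) (r : ℝ) : Set (Eucl n) :=
  {x : Eucl n | ∀ i, |x i - z i| ≤ r}

/-- The quantity `|Q|^(-1-δ/n) ∫_Q |u - u_Q|` for the cube `Q = cube n z r`. -/
def aTerm (n : ℕ) (δ : ℝ) (u : Eucl n → ℝ) (z : Eucl n) (r : ℝ) : ℝ :=
  ((volume (cube n z r)).toReal) ^ (-(1:ℝ) - δ / n) *
    ∫ x in cube n z r, |u x - ⨍ y in cube n z r, u y ∂volume| ∂volume

/-- The seminorm `|u|_{A^{δ,p}_κ(G)}`: the supremum, over families `𝒬` of pairwise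
disjoint cubes `Q` (given by center-halfside pairs) with `κQ ⊆ G`, of the `L^p(G)`
norm of `∑_{Q ∈ 𝒬} (|Q|^(-1-δ/n) ∫_Q |u - u_Q|) χ_Q`. -/
def ASeminorm (n : ℕ) (κ δ p : ℝ) (G : Set (Eucl n)) (u : Eucl n → ℝ) : ℝ≥0∞ :=
  ⨆ (𝒬 : Set (Eucl n × ℝ)) (_ : ∀ c ∈ 𝒬, 0 < c.2 ∧ cube n c.1 (κ * c.2) ⊆ G)
    (_ : ∀ c ∈ 𝒬, ∀ c' ∈ 𝒬, c ≠ c' → cube n c.1 c.2 ∩ cube n c'.1 c'.2 = ∅),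
    (∫⁻ x in G,
        (∑' c : 𝒬, (cube n (c : Eucl n × ℝ).1 (c : Eucl n × ℝ).2).indicator
          (fun _ => ENNReal.ofReal (aTerm n δ u (c : Eucl n × ℝ).1 (c : Eucl n × ℝ).2)) x) ^ p
      ∂volume) ^ (1 / p)

/-- `Q` is a closed dyadic cube in `ℝⁿ`. -/
def IsDyadicCube (n : ℕ) (Q : Set (Eucl n)) : Prop :=
  ∃ (k : ℤ) (z : Fin n → ℤ),
    Q = {x : Eucl n | ∀ i, (z i : ℝ) * (2:ℝ) ^ k ≤ x i ∧ x i ≤ ((z i : ℝ) + 1) * (2:ℝ) ^ k}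

/-- `W` is a Whitney decomposition of the proper open set `G`: a countable family of
closed dyadic cubes with pairwise disjoint interiors whose union is `G`, with
`diam Q ≤ dist(Q, ∂G) ≤ 4 diam Q` for each cube `Q ∈ W`. -/
def IsWhitneyDecomposition (n : ℕ) (G : Set (Eucl n)) (W : Set (Set (Eucl n))) : Prop :=
  W.Countable ∧ (∀ Q ∈ W, IsDyadicCube n Q) ∧ ⋃₀ W = G ∧
    (W.Pairwise fun Q R => interior Q ∩ interior R = ∅) ∧
    ∀ Q ∈ W, (∀ x ∈ Q, Metric.diam Q ≤ infDist x (frontier G)) ∧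
      ∃ x ∈ Q, infDist x (frontier G) ≤ 4 * Metric.diam Q

/-- `lam` is an upper Assouad-type covering exponent for `E`: there is `C > 0` such
that for every `x ∈ E` and all `0 < r < R < 2 diam E`, the set `E ∩ B(x,R)` can be
covered by at most `C (R/r)^lam` balls centered in `E` of radius `r`. -/
def UpperAssouadBound (n : ℕ) (E : Set (Eucl n)) (lam : ℝ) : Prop :=
  ∃ C : ℝ, 0 < C ∧ ∀ x ∈ E, ∀ r R : ℝ, 0 < r → r < R →
    ENNReal.ofReal R < 2 * EMetric.diam E →
    ∃ F : Finset (Eucl n), ↑F ⊆ E ∧ (F.card : ℝ) ≤ C * (R / r) ^ lam ∧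
      E ∩ ball x R ⊆ ⋃ y ∈ F, ball y r

/-- The upper Assouad dimension of `E`. -/
def upperAssouadDim (n : ℕ) (E : Set (Eucl n)) : ℝ :=
  sInf {lam : ℝ | 0 ≤ lam ∧ UpperAssouadBound n E lam}

/-- `lam` is a lower Assouad-type exponent for `E`: there is `C > 0` such that for
every `x ∈ E` and all `0 < r < R < 2 diam E`, at least `C (R/r)^lam` balls centered
in `E` of radius `r` are needed to cover `E ∩ B(x,R)`. -/
def LowerAssouadBound (n : ℕ) (E : Set (Eucl n)) (lam : ℝ) : Prop :=
  ∃ C : ℝ, 0 < C ∧ ∀ x ∈ E, ∀ r R : ℝ, 0 < r → r < R →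
    ENNReal.ofReal R < 2 * EMetric.diam E →
    ∀ F : Finset (Eucl n), ↑F ⊆ E → (E ∩ ball x R ⊆ ⋃ y ∈ F, ball y r) →
      C * (R / r) ^ lam ≤ (F.card : ℝ)

/-- The lower Assouad dimension of `E`. -/
def lowerAssouadDim (n : ℕ) (E : Set (Eucl n)) : ℝ :=
  sSup {lam : ℝ | 0 ≤ lam ∧ LowerAssouadBound n E lam}

end

/-- Uniform John data: every point of `D` is joined to the centre `x₀` by a curve on `[0, L]`. -/
structure JohnData (n : ℕ) (D : Set (Eucl n)) (C₁ L : ℝ) (x₀ : Eucl n) : Prop where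
  isOpen : IsOpen D
  frontier_ne : (frontier D).Nonempty
  ne_univ : D ≠ univ
  L_pos : 0 < L
  center_mem : x₀ ∈ D
  curve : ∀ x ∈ D, ∃ γ : ℝ → Eucl n, γ 0 = x ∧ γ L = x₀ ∧ LipschitzOnWith 1 γ (Icc 0 L) ∧
    ∀ t ∈ Icc (0:ℝ) L, γ t ∈ D ∧ t / C₁ ≤ infDist (γ t) (frontier D)

lemma closedBall_subset_of_lt_infDist {n : ℕ} {D : Set (Eucl n)} (hD : D ≠ univ)
    {y : Eucl n} (hy : y ∈ D) {r : ℝ} (hr : r < infDist y (frontier D)) :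
    closedBall y r ⊆ D := by
  obtain ⟨w, hw, hwe⟩ := exists_mem_frontier_infDist_compl_eq_dist hy hD
  have h1 : infDist y (frontier D) ≤ infDist y Dᶜ := by
    rw [hwe]; exact infDist_le_dist_of_mem hw
  exact (closedBall_subset_ball (hr.trans_le h1)).trans ball_infDist_compl_subset

lemma john_data {n : ℕ} (hn : 1 ≤ n) {c : ℝ} (hc : 1 ≤ c) {D : Set (Eucl n)}
    (hJ : IsJohnDomain n c D) (hb : Bornology.IsBounded D) :
    ∃ (L : ℝ) (x₀ : Eucl n), JohnData n D (4 * c ^ 2) L x₀ := by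
  obtain ⟨hO, hcon, hcurve⟩ := hJ
  have : Nonempty (Fin n) := ⟨⟨0, hn⟩⟩
  have hDu : D ≠ univ := by
    rintro rfl
    exact NormedSpace.unbounded_univ ℝ (Eucl n) hb
  have hfr : (frontier D).Nonempty := nonempty_frontier_iff.2 ⟨hcon.nonempty, hDu⟩
  have hfD : ∀ x ∈ D, 0 < infDist x (frontier D) := by
    intro x hx
    refine (isClosed_frontier.notMem_iff_infDist_pos hfr).1 ?_
    intro hx'
    rw [hO.frontier_eq] at hx'
    exact hx'.2 hx
  have hK : IsCompact (closure D) := hb.isCompact_closure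
  obtain ⟨x₀, hx₀K, hmax⟩ := hK.exists_isMaxOn hcon.nonempty.closure
    (continuous_infDist_pt (frontier D)).continuousOn
  have hmax' : ∀ x ∈ D, infDist x (frontier D) ≤ infDist x₀ (frontier D) :=
    fun x hx => hmax (subset_closure hx)
  set d := infDist x₀ (frontier D) with hd
  have hdpos : 0 < d := by
    obtain ⟨x, hx⟩ := hcon.nonempty
    exact (hfD x hx).trans_le (hmax' x hx)
  have hx₀ : x₀ ∈ D := by
    by_contra h
    have : x₀ ∈ frontier D := by rw [hO.frontier_eq]; exact ⟨hx₀K, h⟩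
    have := infDist_zero_of_mem this
    linarith
  have hc0 : 0 < c := by linarith
  refine ⟨4 * c ^ 2 * d, x₀, hO, hfr, hDu, by positivity, hx₀, ?_⟩
  intro x hx
  obtain ⟨l, hl, γ, h0, h1, hin, hlip, hdist⟩ := hcurve x hx x₀ hx₀
  have hl2 : l ≤ 2 * c * d := by
    have hmem : l / 2 ∈ Icc (0:ℝ) l := ⟨by linarith, by linarith⟩
    have h2 := hdist _ hmem
    have h3 := hmax' _ (hin _ hmem)
    have h4 : min (l/2) (l - l/2) = l / 2 := by
      rw [min_eq_left]; linarith
    rw [h4] at h2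
    have h5 := h2.trans h3
    rw [div_le_iff₀ hc0] at h5
    linarith
  have hlL : l ≤ 4 * c ^ 2 * d := by nlinarith
  refine ⟨fun t => γ (min t l), ?_, ?_, ?_, ?_⟩
  · simp [hl, h0]
  · simp [hlL, h1]
  · apply LipschitzOnWith.of_dist_le_mul
    intro s hs t ht
    have hs' : min s l ∈ Icc (0:ℝ) l := ⟨le_min hs.1 hl, min_le_right _ _⟩
    have ht' : min t l ∈ Icc (0:ℝ) l := ⟨le_min ht.1 hl, min_le_right _ _⟩
    refine (hlip.dist_le_mul _ hs' _ ht').trans ?_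
    simp only [NNReal.coe_one, one_mul, Real.dist_eq]
    have := abs_min_sub_min_le_max s l t l
    simpa using this
  · intro t ht
    have ht' : min t l ∈ Icc (0:ℝ) l := ⟨le_min ht.1 hl, min_le_right _ _⟩
    refine ⟨hin _ ht', ?_⟩
    rw [div_le_iff₀ (by positivity)]
    rcases le_total t l with htl | htl
    · simp only [min_eq_left htl]
      rw [min_eq_left htl] at ht'
      have h2 := hdist t ht'
      rw [div_le_iff₀ hc0] at h2
      have hI : 0 ≤ infDist (γ t) (frontier D) := infDist_nonneg
      have hcc : c ≤ c ^ 2 := by nlinarith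
      rcases le_total t (l - t) with h3 | h3
      · rw [min_eq_left h3] at h2
        nlinarith
      · rw [min_eq_right h3] at h2
        have h4 : d ≤ infDist (γ t) (frontier D) + (l - t) := by
          have h5 := infDist_le_infDist_add_dist (s := frontier D) (x := x₀) (y := γ t)
          have h6 := hlip.dist_le_mul l ⟨hl, le_rfl⟩ t ht'
          rw [h1] at h6
          simp only [NNReal.coe_one, one_mul, Real.dist_eq] at h6
          rw [abs_of_nonneg (by linarith [ht'.2])] at h6
          linarith
        have h7 : d ≤ 2 * c * infDist (γ t) (frontier D) := by
          rcases le_total (l - t) (d / 2) with h8 | h8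
          · nlinarith
          · nlinarith
        nlinarith
    · simp only [min_eq_right htl, h1]
      have := ht.2
      nlinarith

lemma JohnData.subset_closedBall {n : ℕ} {D : Set (Eucl n)} {C₁ L : ℝ} {x₀ : Eucl n}
    (h : JohnData n D C₁ L x₀) : D ⊆ closedBall x₀ L := by
  intro x hx
  obtain ⟨γ, h0, h1, hl, -⟩ := h.curve x hx
  have := hl.dist_le_mul 0 ⟨le_rfl, h.L_pos.le⟩ L ⟨h.L_pos.le, le_rfl⟩
  rw [h0, h1] at this
  rw [mem_closedBall]
  simpa [abs_of_pos h.L_pos] using this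

lemma mem_tauBall_of_lt {n : ℕ} {τ : ℝ} (hτ : 0 < τ) {D : Set (Eucl n)} (hD : (frontier D).Nonempty)
    {y z : Eucl n} (h : dist y z < τ * infDist y (frontier D)) : z ∈ tauBall n τ D y := by
  show edist y z < _ * Metric.infEDist y (frontier D)
  have h1 : Metric.infEDist y (frontier D) = ENNReal.ofReal (infDist y (frontier D)) := by
    rw [infDist, ENNReal.ofReal_toReal (infEDist_ne_top hD)]
  rw [h1, ← ENNReal.ofReal_mul hτ.le, edist_dist]
  exact (ENNReal.ofReal_lt_ofReal_iff_of_nonneg dist_nonneg).2 h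

lemma tauBall_subset {n : ℕ} {τ : ℝ} (hτ : τ ∈ Ioo (0:ℝ) 1) {D : Set (Eucl n)}
    (hD : (frontier D).Nonempty) (hDu : D ≠ univ)
    {y : Eucl n} (hy : y ∈ D) : tauBall n τ D y ⊆ D := by
  intro z hz
  have hz' : edist y z < ENNReal.ofReal τ * Metric.infEDist y (frontier D) := hz
  have h1 : Metric.infEDist y (frontier D) = ENNReal.ofReal (infDist y (frontier D)) := by
    rw [infDist, ENNReal.ofReal_toReal (infEDist_ne_top hD)]
  rw [h1, ← ENNReal.ofReal_mul hτ.1.le, edist_dist,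
    ENNReal.ofReal_lt_ofReal_iff_of_nonneg dist_nonneg] at hz'
  have hz2 : dist y z < infDist y (frontier D) := by
    have : 0 ≤ infDist y (frontier D) := infDist_nonneg
    nlinarith [hτ.2]
  exact closedBall_subset_of_lt_infDist hDu hy hz2 (by rw [mem_closedBall, dist_comm])

lemma measurable_kernel {n : ℕ} (τ δ p : ℝ) (D : Set (Eucl n)) {u : Eucl n → ℝ}
    (hu : Measurable u) : Measurable (fun y => ∫⁻ z in tauBall n τ D y, fracKernel n δ p u y z) := by
  have hset : MeasurableSet {q : Eucl n × Eucl n | q.2 ∈ tauBall n τ D q.1} := by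
    refine measurableSet_lt (f := fun q : Eucl n × Eucl n => edist q.1 q.2)
      (g := fun q : Eucl n × Eucl n => ENNReal.ofReal τ * Metric.infEDist q.1 (frontier D)) ?_ ?_
    · exact measurable_fst.edist measurable_snd
    · apply Measurable.const_mul
      exact (continuous_infEDist.measurable).comp measurable_fst
  have hk : Measurable (fun q : Eucl n × Eucl n => fracKernel n δ p u q.1 q.2) := by
    unfold fracKernel
    apply ENNReal.measurable_ofReal.comp
    apply Measurable.div
    · exact ((((hu.comp measurable_fst).sub (hu.comp measurable_snd)).abs).pow_const p)
    · exact ((measurable_fst.dist measurable_snd).pow_const _)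
  have h2 : ∀ y, ∫⁻ z in tauBall n τ D y, fracKernel n δ p u y z
      = ∫⁻ z, {q : Eucl n × Eucl n | q.2 ∈ tauBall n τ D q.1}.indicator
          (fun q => fracKernel n δ p u q.1 q.2) (y, z) := by
    intro y
    have hf : Measurable (fun z : Eucl n => (y, z)) := by fun_prop
    have hm : MeasurableSet (tauBall n τ D y) := hf hset
    rw [← lintegral_indicator hm]
    rfl
  simp_rw [h2]
  exact (hk.indicator hset).lintegral_prod_right'

/-- The energy density, extended by zero. -/
noncomputable def eDens (n : ℕ) (δ τ p : ℝ) (D : Set (Eucl n)) (u : Eucl n → ℝ) : Eucl n → ℝ≥0∞ :=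
  D.indicator (fun y => ∫⁻ z in tauBall n τ D y, fracKernel n δ p u y z)

lemma measurable_eDens {n : ℕ} (τ δ p : ℝ) {D : Set (Eucl n)} (hD : IsOpen D) {u : Eucl n → ℝ}
    (hu : Measurable u) : Measurable (eDens n δ τ p D u) :=
  (measurable_kernel τ δ p D hu).indicator hD.measurableSet

lemma lintegral_eDens {n : ℕ} (τ δ p : ℝ) {D : Set (Eucl n)} (hD : IsOpen D) (u : Eucl n → ℝ) :
    ∫⁻ y, eDens n δ τ p D u y = fracEnergyTau n δ τ p D u := by
  unfold eDens fracEnergyTau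
  rw [lintegral_indicator hD.measurableSet]

/-- Volume of the unit ball. -/
noncomputable def omg (n : ℕ) : ℝ := (volume (ball (0 : Eucl n) 1)).toReal

lemma omg_pos (n : ℕ) : 0 < omg n :=
  ENNReal.toReal_pos (measure_ball_pos _ _ one_pos).ne' measure_ball_lt_top.ne

lemma vol_cb {n : ℕ} (x : Eucl n) {r : ℝ} (hr : 0 ≤ r) :
    volume (closedBall x r) = ENNReal.ofReal (omg n * r ^ n) := by
  rw [Measure.addHaar_closedBall _ _ hr, mul_comm, ENNReal.ofReal_mul (omg_pos n).le, omg,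
    ENNReal.ofReal_toReal measure_ball_lt_top.ne]
  simp

lemma le_theta_add {a θ p : ℝ} (ha : 0 ≤ a) (hθ : 0 < θ) (hp : 1 ≤ p) :
    a ≤ θ + θ ^ (1 - p) * a ^ p := by
  rcases le_total a θ with h | h
  · have : 0 ≤ θ ^ (1 - p) * a ^ p := by positivity
    linarith
  · have ha' : 0 < a := hθ.trans_le h
    have h1 : a ^ (1 - p) ≤ θ ^ (1 - p) :=
      Real.rpow_le_rpow_of_nonpos hθ h (by linarith)
    have h2 : a ^ (1 - p) * a ^ p = a := by
      rw [← Real.rpow_add ha']; simp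
    have : a ^ (1 - p) * a ^ p ≤ θ ^ (1 - p) * a ^ p := by gcongr
    linarith

lemma ofReal_abs_sub_avg_le {n : ℕ} {u : Eucl n → ℝ} {B : Set (Eucl n)} (hB0 : volume B ≠ 0)
    (hB : volume B ≠ ∞) (hu : IntegrableOn u B) (a : ℝ) :
    ENNReal.ofReal |a - ⨍ z in B, u z| ≤ (volume B)⁻¹ * ∫⁻ z in B, ENNReal.ofReal |a - u z| := by
  have h1 : a - ⨍ z in B, u z = ⨍ z in B, (a - u z) := by
    have : IsFiniteMeasure (volume.restrict B) := ⟨by simpa using hB.lt_top⟩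
    have : NeZero (volume.restrict B) := ⟨by simpa using hB0⟩
    rw [average_eq, average_eq, integral_sub (integrable_const a) hu]
    have h3 : (volume.restrict B).real univ ≠ 0 := by
      simp [Measure.real, ENNReal.toReal_eq_zero_iff, hB0, hB]
    simp only [integral_const, smul_eq_mul]
    field_simp
  rw [h1, average_eq', ← Real.enorm_eq_ofReal_abs]
  refine (enorm_integral_le_lintegral_enorm _).trans ?_
  rw [lintegral_smul_measure]
  simp [Real.enorm_eq_ofReal_abs]

lemma avg_le {n : ℕ} {u : Eucl n → ℝ} (hu : Measurable u) {B B' : Set (Eucl n)}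
    (hB'0 : volume B' ≠ 0)
    (hB' : volume B' ≠ ∞) (hui : IntegrableOn u B') {θ p : ℝ} (hθ : 0 < θ) (hp : 1 ≤ p) :
    ∫⁻ y in B, ENNReal.ofReal |u y - ⨍ z in B', u z| ≤
      ENNReal.ofReal θ * volume B + ENNReal.ofReal (θ ^ (1 - p)) * (volume B')⁻¹ *
        ∫⁻ y in B, ∫⁻ z in B', ENNReal.ofReal (|u y - u z| ^ p) := by
  have hm : Measurable (fun q : Eucl n × Eucl n => ENNReal.ofReal (|u q.1 - u q.2| ^ p)) := by
    fun_prop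
  have key : ∀ y, ENNReal.ofReal |u y - ⨍ z in B', u z| ≤ ENNReal.ofReal θ +
      ENNReal.ofReal (θ ^ (1 - p)) * (volume B')⁻¹ *
        ∫⁻ z in B', ENNReal.ofReal (|u y - u z| ^ p) := by
    intro y
    refine (ofReal_abs_sub_avg_le hB'0 hB' hui (u y)).trans ?_
    have h1 : ∫⁻ z in B', ENNReal.ofReal |u y - u z| ≤
        ∫⁻ z in B', (ENNReal.ofReal θ + ENNReal.ofReal (θ ^ (1 - p)) *
          ENNReal.ofReal (|u y - u z| ^ p)) := by
      apply lintegral_mono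
      intro z
      dsimp only
      rw [← ENNReal.ofReal_mul (by positivity), ← ENNReal.ofReal_add hθ.le (by positivity)]
      exact ENNReal.ofReal_le_ofReal (le_theta_add (abs_nonneg _) hθ hp)
    have hm2 : Measurable (fun z => ENNReal.ofReal (|u y - u z| ^ p)) := by fun_prop
    rw [lintegral_add_left measurable_const, lintegral_const_mul _ hm2] at h1
    simp only [lintegral_const, Measure.restrict_apply_univ] at h1
    calc _ ≤ (volume B')⁻¹ * (ENNReal.ofReal θ * volume B' + ENNReal.ofReal (θ ^ (1 - p)) *
          ∫⁻ z in B', ENNReal.ofReal (|u y - u z| ^ p)) := by gcongr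
      _ = ENNReal.ofReal θ * ((volume B')⁻¹ * volume B') + ENNReal.ofReal (θ ^ (1 - p)) *
          (volume B')⁻¹ * ∫⁻ z in B', ENNReal.ofReal (|u y - u z| ^ p) := by ring
      _ ≤ _ := by rw [ENNReal.inv_mul_cancel hB'0 hB', mul_one]
  refine (lintegral_mono key).trans ?_
  rw [lintegral_add_left measurable_const, lintegral_const_mul _ hm.lintegral_prod_right']
  simp

/-- The constant in the local Poincaré estimate. -/
noncomputable def C2 (n : ℕ) (δ p κ : ℝ) : ℝ :=
  (3 * κ) ^ ((n:ℝ) + δ * p) / (omg n ^ 2 * (κ / 2) ^ (2 * n))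

lemma C2_pos (n : ℕ) (δ p : ℝ) {κ : ℝ} (hκ : 0 < κ) : 0 < C2 n δ p κ := by
  have := omg_pos n
  unfold C2; positivity

lemma poincare {n : ℕ} {δ τ p κ : ℝ} (hδ : 0 < δ) (hp : 1 ≤ p) (hκ : 0 < κ) {D : Set (Eucl n)}
    {u : Eucl n → ℝ} (hu : Measurable u) (hul : LocallyIntegrable u)
    {t r r' : ℝ} (ht : 0 < t) (hr : κ * t / 2 ≤ r) (hr' : κ * t / 2 ≤ r')
    {y₀ z₀ : Eucl n}
    (hgeo : ∀ y ∈ closedBall y₀ r, y ∈ D ∧ ∀ z ∈ closedBall z₀ r', dist y z ≤ 3 * κ * t ∧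
      z ∈ tauBall n τ D y)
    {θ : ℝ} (hθ : 0 < θ)
    (hE : ENNReal.ofReal (C2 n δ p κ) * ∫⁻ y in closedBall y₀ r, eDens n δ τ p D u y ≤
      ENNReal.ofReal (θ ^ p * t ^ ((n:ℝ) - δ * p))) :
    ∫⁻ y in closedBall y₀ r, ENNReal.ofReal |u y - ⨍ z in closedBall z₀ r', u z| ≤
      ENNReal.ofReal (2 * θ) * volume (closedBall y₀ r) := by
  have hω := omg_pos n
  have hr0 : 0 < r := lt_of_lt_of_le (by positivity) hr
  have hr0' : 0 < r' := lt_of_lt_of_le (by positivity) hr'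
  have hp0 : 0 < p := by linarith
  have hvB := vol_cb y₀ hr0.le
  have hvB' := vol_cb z₀ hr0'.le
  have hB'0 : volume (closedBall z₀ r') ≠ 0 := by
    rw [hvB']; simp only [ne_eq, ENNReal.ofReal_eq_zero, not_le]; positivity
  have hB'1 : volume (closedBall z₀ r') ≠ ∞ := by rw [hvB']; exact ENNReal.ofReal_ne_top
  refine (avg_le hu (B := closedBall y₀ r) hB'0 hB'1
    (hul.integrableOn_isCompact (isCompact_closedBall _ _)) hθ hp).trans ?_
  -- X bound
  set I := ∫⁻ y in closedBall y₀ r, eDens n δ τ p D u y with hI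
  have hX : ∫⁻ y in closedBall y₀ r, ∫⁻ z in closedBall z₀ r', ENNReal.ofReal (|u y - u z| ^ p)
      ≤ ENNReal.ofReal ((3 * κ * t) ^ ((n:ℝ) + δ * p)) * I := by
    rw [hI, ← lintegral_const_mul' _ _ ENNReal.ofReal_ne_top]
    refine setLIntegral_mono' measurableSet_closedBall fun y hy => ?_
    obtain ⟨hyD, hyz⟩ := hgeo y hy
    rw [eDens, indicator_of_mem hyD, ← lintegral_const_mul' _ _ ENNReal.ofReal_ne_top]
    calc ∫⁻ z in closedBall z₀ r', ENNReal.ofReal (|u y - u z| ^ p)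
        ≤ ∫⁻ z in closedBall z₀ r', ENNReal.ofReal ((3 * κ * t) ^ ((n:ℝ) + δ * p)) *
            fracKernel n δ p u y z := by
          refine setLIntegral_mono' measurableSet_closedBall fun z hz => ?_
          rw [fracKernel, ← ENNReal.ofReal_mul (by positivity)]
          apply ENNReal.ofReal_le_ofReal
          rcases eq_or_ne y z with rfl | hne
          · simp [Real.zero_rpow hp0.ne']
          · have hd : 0 < dist y z := dist_pos.2 hne
            have h1 : dist y z ^ ((n:ℝ) + δ * p) ≤ (3 * κ * t) ^ ((n:ℝ) + δ * p) :=
              Real.rpow_le_rpow hd.le (hyz z hz).1 (by positivity)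
            rw [mul_div_assoc', le_div_iff₀ (by positivity), mul_comm]
            gcongr
      _ ≤ _ := lintegral_mono_set fun z hz => (hyz z hz).2
  -- the algebra
  have hX2 : ∫⁻ y in closedBall y₀ r, ∫⁻ z in closedBall z₀ r', ENNReal.ofReal (|u y - u z| ^ p)
      ≤ ENNReal.ofReal (θ ^ p) * volume (closedBall y₀ r) * volume (closedBall z₀ r') := by
    have e1 : (3 * κ * t) ^ ((n:ℝ) + δ * p) =
        (omg n ^ 2 * (κ / 2) ^ (2 * n) * t ^ ((n:ℝ) + δ * p)) * C2 n δ p κ := by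
      rw [C2, Real.mul_rpow (by positivity) ht.le]
      field_simp
    refine hX.trans ?_
    rw [e1, ENNReal.ofReal_mul (by positivity), mul_assoc]
    refine (mul_le_mul_right hE _).trans ?_
    rw [hvB, hvB', ← ENNReal.ofReal_mul (by positivity), ← ENNReal.ofReal_mul (by positivity),
      ← ENNReal.ofReal_mul (by positivity)]
    apply ENNReal.ofReal_le_ofReal
    have e2 : t ^ ((n:ℝ) + δ * p) * t ^ ((n:ℝ) - δ * p) = t ^ n * t ^ n := by
      rw [← Real.rpow_add ht, ← Real.rpow_natCast, ← Real.rpow_add ht]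
      congr 1; ring
    calc omg n ^ 2 * (κ / 2) ^ (2 * n) * t ^ ((n:ℝ) + δ * p) * (θ ^ p * t ^ ((n:ℝ) - δ * p))
        = omg n ^ 2 * (κ / 2) ^ (2 * n) * θ ^ p *
            (t ^ ((n:ℝ) + δ * p) * t ^ ((n:ℝ) - δ * p)) := by ring
      _ = θ ^ p * (omg n * (κ * t / 2) ^ n) * (omg n * (κ * t / 2) ^ n) := by
          rw [e2]; simp only [div_pow, mul_pow]; rw [pow_mul', pow_mul']; ring
      _ ≤ _ := by gcongr
  calc _ ≤ ENNReal.ofReal θ * volume (closedBall y₀ r) +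
        ENNReal.ofReal (θ ^ (1 - p)) * (volume (closedBall z₀ r'))⁻¹ *
        (ENNReal.ofReal (θ ^ p) * volume (closedBall y₀ r) * volume (closedBall z₀ r')) := by gcongr
    _ = ENNReal.ofReal θ * volume (closedBall y₀ r) +
        (ENNReal.ofReal (θ ^ (1 - p)) * ENNReal.ofReal (θ ^ p)) * volume (closedBall y₀ r) *
         ((volume (closedBall z₀ r'))⁻¹ * volume (closedBall z₀ r')) := by ring
    _ = _ := by
      rw [ENNReal.inv_mul_cancel hB'0 hB'1, ← ENNReal.ofReal_mul (by positivity),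
        ← Real.rpow_add hθ]
      simp only [sub_add_cancel, Real.rpow_one, mul_one]
      rw [two_mul, ENNReal.ofReal_add hθ.le hθ.le, add_mul]

lemma poincare_avg {n : ℕ} {u : Eucl n → ℝ} (hul : LocallyIntegrable u)
    {r : ℝ} (hr : 0 < r) {y₀ : Eucl n} {a θ : ℝ} (hθ : 0 < θ)
    (h : ∫⁻ y in closedBall y₀ r, ENNReal.ofReal |u y - a| ≤
      ENNReal.ofReal (2 * θ) * volume (closedBall y₀ r)) :
    |a - ⨍ y in closedBall y₀ r, u y| ≤ 2 * θ := by
  have hω := omg_pos n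
  have hvB := vol_cb y₀ hr.le
  have hB'0 : volume (closedBall y₀ r) ≠ 0 := by
    rw [hvB]; simp only [ne_eq, ENNReal.ofReal_eq_zero, not_le]; positivity
  have hB'1 : volume (closedBall y₀ r) ≠ ∞ := by rw [hvB]; exact ENNReal.ofReal_ne_top
  have h1 := ofReal_abs_sub_avg_le hB'0 hB'1
    (hul.integrableOn_isCompact (isCompact_closedBall _ _)) a
  rw [← ENNReal.ofReal_le_ofReal_iff (by positivity)]
  refine h1.trans ?_
  simp_rw [abs_sub_comm a]
  calc _ ≤ (volume (closedBall y₀ r))⁻¹ * (ENNReal.ofReal (2 * θ) * volume (closedBall y₀ r)) := by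
        gcongr
    _ = ENNReal.ofReal (2 * θ) * ((volume (closedBall y₀ r))⁻¹ * volume (closedBall y₀ r)) := by
        ring
    _ = _ := by rw [ENNReal.inv_mul_cancel hB'0 hB'1, mul_one]

lemma chain_geo {n : ℕ} {D : Set (Eucl n)} {C₁ L τ κ : ℝ} {x₀ : Eucl n} (hC : 1 ≤ C₁)
    (hτ : τ ∈ Ioo (0:ℝ) 1) (hκ : κ = τ / (8 * C₁))
    (hJ : JohnData n D C₁ L x₀) {γ : ℝ → Eucl n} (hlip : LipschitzOnWith 1 γ (Icc 0 L))
    (hγ : ∀ t ∈ Icc (0:ℝ) L, γ t ∈ D ∧ t / C₁ ≤ infDist (γ t) (frontier D))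
    {s t : ℝ} (ht : 0 < t) (htL : t ≤ L) (hst : s ≤ t) (hs : (1 - κ) * t ≤ s) (hs0 : 0 < s) :
    ∀ y ∈ closedBall (γ t) (κ * t), y ∈ D ∧ ∀ z ∈ closedBall (γ s) (κ * s),
      dist y z ≤ 3 * κ * t ∧ z ∈ tauBall n τ D y := by
  have hκ0 : 0 < κ := by rw [hκ]; have := hτ.1; positivity
  have hκC : κ * C₁ = τ / 8 := by rw [hκ]; field_simp
  have ht' : t ∈ Icc (0:ℝ) L := ⟨ht.le, htL⟩
  have hs' : s ∈ Icc (0:ℝ) L := ⟨hs0.le, hst.trans htL⟩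
  obtain ⟨hin, hdist⟩ := hγ t ht'
  have htC : t / C₁ = κ * t * (8 / τ) := by
    have := hτ.1
    rw [hκ]; field_simp
  have hkt : 0 < κ * t := by positivity
  have h8 : 8 < 8 / τ := by rw [lt_div_iff₀ hτ.1]; linarith [hτ.2]
  have hbig : 8 * (κ * t) < t / C₁ := by rw [htC]; nlinarith
  intro y hy
  refine ⟨closedBall_subset_of_lt_infDist hJ.ne_univ hin (by linarith) hy, ?_⟩
  intro z hz
  have h1 : dist (γ t) (γ s) ≤ t - s := by
    have := hlip.dist_le_mul t ht' s hs'
    simpa [Real.dist_eq, abs_of_nonneg (sub_nonneg.2 hst)] using this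
  rw [mem_closedBall] at hy hz
  have h2 : dist y z ≤ 3 * κ * t := by
    have := dist_triangle4 y (γ t) (γ s) z
    rw [dist_comm (γ s) z] at this
    have h3 : κ * s ≤ κ * t := by gcongr
    nlinarith
  refine ⟨h2, mem_tauBall_of_lt hτ.1 hJ.frontier_ne ?_⟩
  have h4 := infDist_le_infDist_add_dist (s := frontier D) (x := γ t) (y := y)
  rw [dist_comm] at h4
  have h5 : κ * t * (8 / τ) - κ * t ≤ infDist y (frontier D) := by rw [← htC]; linarith
  have h6 : τ * (κ * t * (8 / τ) - κ * t) ≤ τ * infDist y (frontier D) :=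
    mul_le_mul_of_nonneg_left h5 hτ.1.le
  have h7 : τ * (κ * t * (8 / τ) - κ * t) = κ * t * (8 - τ) := by
    have := hτ.1.ne'
    field_simp
  have := hτ.2
  nlinarith

lemma pointwise_chain {n : ℕ} {D : Set (Eucl n)} {C₁ L τ κ δ p : ℝ} {x₀ : Eucl n} (hC : 1 ≤ C₁)
    (hτ : τ ∈ Ioo (0:ℝ) 1) (hδ : 0 < δ) (hp : 1 ≤ p) (hκ : κ = τ / (8 * C₁))
    (hJ : JohnData n D C₁ L x₀) {u : Eucl n → ℝ} (hu : Measurable u) (hul : LocallyIntegrable u) :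
    ∀ᵐ x ∂(volume : Measure (Eucl n)), x ∈ D → ∀ (θ : ℕ → ℝ) (K : ℝ), (∀ i, 0 < θ i) →
      (∀ i, ENNReal.ofReal (C2 n δ p κ) *
        ∫⁻ y in closedBall x (2 * (L * (1 - κ) ^ i)), eDens n δ τ p D u y ≤
          ENNReal.ofReal (θ i ^ p * (L * (1 - κ) ^ i) ^ ((n:ℝ) - δ * p))) →
      (∀ N, ∑ i ∈ Finset.range N, 2 * θ i ≤ K) →
      |u x - ⨍ y in closedBall x₀ (κ * L), u y| ≤ K := by
  have hκ0 : 0 < κ := by rw [hκ]; have := hτ.1; positivity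
  have hκ1 : κ < 1 / 8 := by
    rw [hκ, div_lt_div_iff₀ (by positivity) (by norm_num)]; nlinarith [hτ.2]
  have hL := hJ.L_pos
  filter_upwards [IsUnifLocDoublingMeasure.ae_tendsto_average volume hul (1 / κ)] with x hx hxD
  intro θ K hθ hE hK
  obtain ⟨γ, h0, h1, hlip, hγ⟩ := hJ.curve x hxD
  set t : ℕ → ℝ := fun i => L * (1 - κ) ^ i with ht
  have htpos : ∀ i, 0 < t i := fun i => by
    have : 0 < 1 - κ := by linarith
    simp only [ht]; positivity
  have htL : ∀ i, t i ≤ L := fun i => by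
    simp only [ht]
    have : (1 - κ) ^ i ≤ 1 := pow_le_one₀ (by linarith) (by linarith)
    nlinarith
  have hsucc : ∀ i, t (i + 1) = (1 - κ) * t i := fun i => by simp only [ht]; ring
  have htlim : Filter.Tendsto t Filter.atTop (nhds 0) := by
    have := (tendsto_pow_atTop_nhds_zero_of_lt_one (r := 1 - κ) (by linarith)
      (by linarith)).const_mul L
    simpa [ht] using this
  set a : ℕ → ℝ := fun i => ⨍ y in closedBall (γ (t i)) (κ * t i), u y with ha
  have hdx : ∀ i, dist x (γ (t i)) ≤ t i := fun i => by
    have := hlip.dist_le_mul 0 ⟨le_rfl, hL.le⟩ (t i) ⟨(htpos i).le, htL i⟩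
    rw [h0] at this
    simpa [Real.dist_eq, abs_of_pos (htpos i)] using this
  have hlim : Filter.Tendsto a Filter.atTop (nhds (u x)) := by
    apply hx (fun i => γ (t i)) (fun i => κ * t i)
    · rw [tendsto_nhdsWithin_iff]
      refine ⟨by simpa using htlim.const_mul κ, Filter.Eventually.of_forall fun i => ?_⟩
      have := htpos i
      simp only [mem_Ioi]; positivity
    · refine Filter.Eventually.of_forall fun i => ?_
      rw [mem_closedBall]
      have : 1 / κ * (κ * t i) = t i := by field_simp
      rw [this]; exact hdx i
  have hstep : ∀ i, dist (a i) (a (i + 1)) ≤ 2 * θ i := by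
    intro i
    have hti := htpos i
    have hr : κ * t i / 2 ≤ κ * t i := by have : 0 < κ * t i := by positivity
                                          linarith
    have hr' : κ * t i / 2 ≤ κ * t (i + 1) := by rw [hsucc]; nlinarith [mul_pos hκ0 hti]
    have hgeo := chain_geo hC hτ hκ hJ hlip hγ hti (htL i) (s := t (i + 1))
      (by rw [hsucc]; nlinarith) (by rw [hsucc]) (htpos _)
    have hE' : ENNReal.ofReal (C2 n δ p κ) *
        ∫⁻ y in closedBall (γ (t i)) (κ * t i), eDens n δ τ p D u y ≤
          ENNReal.ofReal (θ i ^ p * (t i) ^ ((n:ℝ) - δ * p)) := by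
      refine le_trans ?_ (hE i)
      gcongr
      intro y hy
      rw [mem_closedBall] at hy ⊢
      have h1 := dist_triangle y (γ (t i)) x
      have h2 := hdx i
      rw [dist_comm] at h2
      have : κ * t i ≤ t i := by nlinarith
      show _ ≤ 2 * t i
      linarith
    have := poincare hδ hp hκ0 hu hul hti hr hr' hgeo (hθ i) hE'
    have := poincare_avg hul (by positivity) (hθ i) this
    rw [Real.dist_eq, abs_sub_comm]
    exact this
  have ha0 : a 0 = ⨍ y in closedBall x₀ (κ * L), u y := by
    simp [ha, ht, h1]
  have hN : ∀ N, |a N - a 0| ≤ K := fun N => by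
    rw [← Real.dist_eq, dist_comm]
    refine (dist_le_range_sum_dist a N).trans ((Finset.sum_le_sum fun i _ => hstep i).trans (hK N))
  rw [← ha0]
  exact le_of_tendsto' ((hlim.sub_const (a 0)).abs) hN

lemma sum_weights {μ : ℝ} (h0 : 0 < μ) (h1 : μ < 1) (j N : ℕ) :
    ∑ i ∈ Finset.range N, μ ^ ((i - j) + (j - i)) ≤ 2 / (1 - μ) := by
  have hg : ∀ M, ∑ i ∈ Finset.range M, μ ^ i ≤ 1 / (1 - μ) := fun M => by
    rw [one_div, ← tsum_geometric_of_lt_one h0.le h1]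
    exact (summable_geometric_of_lt_one h0.le h1).sum_le_tsum _ (fun i _ => by positivity)
  calc ∑ i ∈ Finset.range N, μ ^ ((i - j) + (j - i))
      ≤ ∑ i ∈ Finset.range (j + N), μ ^ ((i - j) + (j - i)) := by
        apply Finset.sum_le_sum_of_subset_of_nonneg
        · intro i; simp; omega
        · intros; positivity
    _ = ∑ i ∈ Finset.range j, μ ^ ((i - j) + (j - i)) +
        ∑ i ∈ Finset.range N, μ ^ ((j + i - j) + (j - (j + i))) := Finset.sum_range_add _ _ _
    _ ≤ ∑ i ∈ Finset.range j, μ ^ i + ∑ i ∈ Finset.range N, μ ^ i := by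
        gcongr ?_ + ?_
        · rw [← Finset.sum_range_reflect (fun i => μ ^ i)]
          apply Finset.sum_le_sum
          intro i hi
          rw [Finset.mem_range] at hi
          exact pow_le_pow_of_le_one h0.le h1.le (by omega)
        · apply Finset.sum_le_sum
          intro i hi
          exact pow_le_pow_of_le_one h0.le h1.le (by omega)
    _ ≤ 1 / (1 - μ) + 1 / (1 - μ) := add_le_add (hg _) (hg _)
    _ = _ := by ring

lemma lintegral_ball_avg {n : ℕ} {G : Eucl n → ℝ≥0∞} (hG : Measurable G) {r : ℝ} (hr : 0 ≤ r) :
    Measurable (fun x => ∫⁻ y in closedBall x r, G y) ∧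
    ∫⁻ x, ∫⁻ y in closedBall x r, G y = ENNReal.ofReal (omg n * r ^ n) * ∫⁻ y, G y := by
  have hset : MeasurableSet {q : Eucl n × Eucl n | dist q.2 q.1 ≤ r} :=
    measurableSet_le (measurable_snd.dist measurable_fst) measurable_const
  set F : Eucl n × Eucl n → ℝ≥0∞ := {q : Eucl n × Eucl n | dist q.2 q.1 ≤ r}.indicator
    (fun q => G q.2) with hF
  have hFm : Measurable F := (hG.comp measurable_snd).indicator hset
  have h1 : ∀ x, ∫⁻ y in closedBall x r, G y = ∫⁻ y, F (x, y) := by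
    intro x
    rw [← lintegral_indicator measurableSet_closedBall]
    rfl
  simp_rw [h1]
  refine ⟨hFm.lintegral_prod_right', ?_⟩
  rw [lintegral_lintegral_swap (f := fun x y => F (x, y)) hFm.aemeasurable]
  rw [← lintegral_const_mul _ hG]
  congr 1; ext y
  rw [← vol_cb y hr, mul_comm]
  rw [← setLIntegral_const, ← lintegral_indicator measurableSet_closedBall]
  congr 1; ext x
  simp only [hF, indicator, mem_ofPred_eq, mem_closedBall, dist_comm]

lemma markov_ball {n : ℕ} {G : Eucl n → ℝ≥0∞} (hG : Measurable G) {r : ℝ} (hr : 0 ≤ r)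
    {C e θ : ℝ} (hC : 0 ≤ C) (hGe : ∫⁻ y, G y ≤ ENNReal.ofReal e) (hθ : 0 < θ) :
    volume {x | ENNReal.ofReal θ ≤ ENNReal.ofReal C * ∫⁻ y in closedBall x r, G y} ≤
      ENNReal.ofReal (C * (omg n * r ^ n) * e / θ) := by
  obtain ⟨hm, hi⟩ := lintegral_ball_avg hG hr
  have hω := omg_pos n
  have h1 := meas_ge_le_lintegral_div (μ := volume)
    (f := fun x => ENNReal.ofReal C * ∫⁻ y in closedBall x r, G y)
    (hm.const_mul _).aemeasurable (ε := ENNReal.ofReal θ) (by simpa using hθ) ENNReal.ofReal_ne_top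
  refine h1.trans ?_
  rw [lintegral_const_mul _ hm, hi, ENNReal.ofReal_div_of_pos hθ,
    ENNReal.ofReal_mul (p := C * (omg n * r ^ n)) (by positivity),
    ENNReal.ofReal_mul (p := C) hC, mul_assoc]
  gcongr

lemma weak_type {n : ℕ} {C₁ τ δ p : ℝ} (hC : 1 ≤ C₁)
    (hτ : τ ∈ Ioo (0:ℝ) 1) (hδ : 0 < δ) (hp : 1 ≤ p) (hβ : 0 < (n:ℝ) - δ * p) :
    ∃ C₄ : ℝ, 0 < C₄ ∧ ∀ (D : Set (Eucl n)) (L : ℝ) (x₀ : Eucl n), JohnData n D C₁ L x₀ →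
      ∀ v : Eucl n → ℝ, Measurable v → LocallyIntegrable v → ∀ e s : ℝ, 0 < e → 0 < s →
        fracEnergyTau n δ τ p D v ≤ ENNReal.ofReal e →
        volume {x | x ∈ D ∧ s ≤ |v x - ⨍ y in closedBall x₀ (τ / (8 * C₁) * L), v y|} ≤
          ENNReal.ofReal (C₄ * (e / s ^ p) ^ ((n:ℝ) / ((n:ℝ) - δ * p))) := by
  obtain ⟨κ, hκ⟩ : ∃ κ, κ = τ / (8 * C₁) := ⟨_, rfl⟩
  have hκ0 : 0 < κ := by rw [hκ]; have := hτ.1; positivity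
  have hκ1 : κ < 1 / 8 := by
    rw [hκ, div_lt_div_iff₀ (by positivity) (by norm_num)]; nlinarith [hτ.2]
  have hp0 : 0 < p := by linarith
  have hω := omg_pos n
  obtain ⟨l, hl⟩ : ∃ l, l = 1 - κ := ⟨_, rfl⟩
  have hl0 : 0 < l := by linarith
  have hl1 : l < 1 := by linarith
  obtain ⟨β, hβe⟩ : ∃ β, β = (n:ℝ) - δ * p := ⟨_, rfl⟩
  obtain ⟨σ, hσe⟩ : ∃ σ, σ = δ * p := ⟨_, rfl⟩
  have hσ : 0 < σ := by rw [hσe]; positivity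
  rw [← hβe] at hβ
  have hnb : (n:ℝ) = β + σ := by rw [hβe, hσe]; ring
  obtain ⟨ε, hε⟩ : ∃ ε, ε = min (δ / 2) (β / p) := ⟨_, rfl⟩
  have hε0 : 0 < ε := by rw [hε]; apply lt_min <;> positivity
  have hεσ : ε * p < σ := by
    have : ε ≤ δ / 2 := by rw [hε]; exact min_le_left _ _
    rw [hσe]; nlinarith [mul_pos hδ hp0]
  have hεβ : ε * p ≤ β := by
    have : ε ≤ β / p := by rw [hε]; exact min_le_right _ _
    rwa [le_div_iff₀ hp0] at this
  obtain ⟨μ, hμ⟩ : ∃ μ, μ = l ^ ε := ⟨_, rfl⟩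
  have hμ0 : 0 < μ := by rw [hμ]; positivity
  have hμ1 : μ < 1 := by rw [hμ]; exact Real.rpow_lt_one hl0.le hl1 hε0
  have hμp : μ ^ p = l ^ (ε * p) := by rw [hμ, ← Real.rpow_mul hl0.le]
  have hμβ : l ^ β ≤ μ ^ p := by
    rw [hμp]; exact Real.rpow_le_rpow_of_exponent_ge hl0 hl1.le hεβ
  obtain ⟨ν, hν⟩ : ∃ ν, ν = l ^ σ / μ ^ p := ⟨_, rfl⟩
  have hν0 : 0 < ν := by rw [hν]; positivity
  have hν1 : ν < 1 := by
    rw [hν, div_lt_one (by positivity), hμp]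
    exact Real.rpow_lt_rpow_of_exponent_gt hl0 hl1 hεσ
  obtain ⟨K, hK⟩ : ∃ K, K = 2 / (1 - μ) := ⟨_, rfl⟩
  have hK0 : 0 < K := by rw [hK]; have : 0 < 1 - μ := by linarith
                         positivity
  have hC2 := C2_pos n δ p hκ0
  set c2 := C2 n δ p κ with hc2
  have h1ν : 0 < 1 - ν := by linarith
  obtain ⟨C', hC'⟩ : ∃ C', C' = omg n + 2 ^ n * omg n * (l ^ σ)⁻¹ / (1 - ν) := ⟨_, rfl⟩
  have hC'0 : 0 < C' := by rw [hC']; positivity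
  refine ⟨C' * (c2 * (4 * K) ^ p) ^ ((n:ℝ) / β), by positivity, ?_⟩
  intro D L x₀ hJ v hv hvl e s he hs hE
  have hL := hJ.L_pos
  rw [← hκ, ← hβe]
  obtain ⟨Q, hQ⟩ : ∃ Q, Q = c2 * (4 * K) ^ p * (e / s ^ p) := ⟨_, rfl⟩
  have hQ0 : 0 < Q := by rw [hQ]; positivity
  have hfin : C' * (c2 * (4 * K) ^ p) ^ ((n:ℝ) / β) * (e / s ^ p) ^ ((n:ℝ) / β) =
      C' * Q ^ ((n:ℝ) / β) := by
    rw [hQ, mul_assoc, ← Real.mul_rpow (by positivity) (by positivity)]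
  rw [hfin]
  obtain ⟨b, hb⟩ : ∃ b, b = s / (4 * K) := ⟨_, rfl⟩
  have hb0 : 0 < b := by rw [hb]; positivity
  have hQb : Q * b ^ p = c2 * e := by
    rw [hQ, hb, Real.div_rpow hs.le (by positivity)]
    have : (4 * K) ^ p ≠ 0 := by positivity
    have : s ^ p ≠ 0 := by positivity
    field_simp
  have hpowQ : ∀ t : ℝ, 0 < t → t ^ β ≤ Q → t ≤ Q ^ (1 / β) := by
    intro t ht h
    have := Real.rpow_le_rpow (by positivity) h (by positivity : 0 ≤ 1 / β)
    rwa [← Real.rpow_mul ht.le, mul_one_div_cancel hβ.ne', Real.rpow_one] at this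
  by_cases htriv : L ^ β ≤ Q
  · calc _ ≤ volume (closedBall x₀ L) := measure_mono fun x hx => hJ.subset_closedBall hx.1
      _ = ENNReal.ofReal (omg n * L ^ n) := vol_cb _ hL.le
      _ ≤ _ := by
        apply ENNReal.ofReal_le_ofReal
        have h1 : L ^ n ≤ Q ^ ((n:ℝ) / β) := by
          have := pow_le_pow_left₀ hL.le (hpowQ L hL htriv) n
          rwa [← Real.rpow_natCast (Q ^ (1 / β)), ← Real.rpow_mul hQ0.le, one_div_mul_eq_div] at this
        have h2 : omg n ≤ C' := by
          rw [hC']; have : 0 ≤ 2 ^ n * omg n * (l ^ σ)⁻¹ / (1 - ν) := by positivity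
          linarith
        gcongr
  -- main case
  set t : ℕ → ℝ := fun i => L * l ^ i with ht
  have htpos : ∀ i, 0 < t i := fun i => by simp only [ht]; positivity
  have htadd : ∀ i m, t (i + m) = t i * l ^ m := fun i m => by simp only [ht]; ring
  have hex : ∃ i, t i ^ β ≤ Q := by
    have h1 : Filter.Tendsto t Filter.atTop (nhds 0) := by
      have := (tendsto_pow_atTop_nhds_zero_of_lt_one (r := l) hl0.le hl1).const_mul L
      simpa [ht] using this
    have h2 := h1.rpow_const (p := β) (Or.inr hβ.le)
    rw [Real.zero_rpow hβ.ne'] at h2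
    exact ((h2.eventually (Iic_mem_nhds hQ0)).exists)
  obtain ⟨j, hj1, hj2⟩ : ∃ j, Q < t j ^ β ∧ t (j + 1) ^ β ≤ Q := by
    classical
    have hf0 : Nat.find hex ≠ 0 := by
      intro h
      have := Nat.find_spec hex
      rw [h] at this
      exact htriv (by simpa [ht] using this)
    obtain ⟨j, hj⟩ := Nat.exists_eq_succ_of_ne_zero hf0
    refine ⟨j, ?_, ?_⟩
    · have := Nat.find_min hex (m := j) (by omega)
      exact not_le.1 this
    · have := Nat.find_spec hex
      rwa [hj] at this
  set θ : ℕ → ℝ := fun i => b * μ ^ ((i - j) + (j - i)) with hθ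
  have hθ0 : ∀ i, 0 < θ i := fun i => by simp only [hθ]; positivity
  have hsum : ∀ N, ∑ i ∈ Finset.range N, 2 * θ i ≤ s / 2 := by
    intro N
    have := sum_weights hμ0 hμ1 j N
    rw [← hK] at this
    have h2 : ∑ i ∈ Finset.range N, 2 * θ i =
        2 * b * ∑ i ∈ Finset.range N, μ ^ ((i - j) + (j - i)) := by
      rw [Finset.mul_sum]; congr 1; ext i; simp only [hθ]; ring
    rw [h2]
    calc _ ≤ 2 * b * K := by gcongr
      _ = s / 2 := by rw [hb]; field_simp; norm_num
  set G := eDens n δ τ p D v with hG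
  have hGm : Measurable G := measurable_eDens τ δ p hJ.isOpen hv
  have hGe : ∫⁻ y, G y ≤ ENNReal.ofReal e := by rw [hG, lintegral_eDens _ _ _ hJ.isOpen]; exact hE
  set S : ℕ → Set (Eucl n) := fun i => {x | ENNReal.ofReal (θ i ^ p * t i ^ β) ≤
    ENNReal.ofReal c2 * ∫⁻ y in closedBall x (2 * t i), G y} with hS
  have hsmall : ∀ i, i < j → c2 * e < θ i ^ p * t i ^ β := by
    intro i hi
    obtain ⟨m, rfl⟩ := Nat.exists_eq_add_of_lt hi
    have h1 : θ i = b * μ ^ (m + 1) := by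
      simp only [hθ]; congr 2; omega
    have h2 : t (i + m + 1) ^ β = t i ^ β * (l ^ β) ^ (m + 1) := by
      rw [add_assoc, htadd, Real.mul_rpow (htpos i).le (by positivity), Real.rpow_pow_comm hl0.le]
    rw [h1, Real.mul_rpow hb0.le (by positivity), ← Real.rpow_pow_comm hμ0.le]
    calc c2 * e = Q * b ^ p := hQb.symm
      _ < t (i + m + 1) ^ β * b ^ p := by gcongr
      _ = t i ^ β * (l ^ β) ^ (m + 1) * b ^ p := by rw [h2]
      _ ≤ t i ^ β * (μ ^ p) ^ (m + 1) * b ^ p := by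
        have := (htpos i).le
        gcongr
      _ = _ := by ring
  have hcover : {x | x ∈ D ∧ s ≤ |v x - ⨍ y in closedBall x₀ (κ * L), v y|} ≤ᵐ[volume]
      ⋃ m, S (j + m) := by
    filter_upwards [pointwise_chain hC hτ hδ hp hκ hJ hv hvl] with x hx hxm
    obtain ⟨hxD, hxs⟩ := hxm
    by_contra hno
    have hno' : ∀ m, x ∉ S (j + m) := fun m hm => hno (mem_iUnion.2 ⟨m, hm⟩)
    have := hx hxD θ (s / 2) hθ0 ?_ hsum
    · linarith
    · intro i
      rw [← hl, ← hβe]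
      rcases lt_or_ge i j with hij | hij
      · calc _ ≤ ENNReal.ofReal c2 * ENNReal.ofReal e := by
              gcongr
              exact (setLIntegral_le_lintegral _ _).trans hGe
          _ = ENNReal.ofReal (c2 * e) := (ENNReal.ofReal_mul hC2.le).symm
          _ ≤ _ := ENNReal.ofReal_le_ofReal (hsmall i hij).le
      · obtain ⟨m, rfl⟩ := Nat.exists_eq_add_of_le hij
        exact (not_le.1 (hno' m)).le
  have hSm : ∀ m, volume (S (j + m)) ≤
      ENNReal.ofReal (2 ^ n * omg n * (l ^ σ)⁻¹ * Q ^ ((n:ℝ) / β) * ν ^ m) := by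
    intro m
    have htm := htpos (j + m)
    have hθm := hθ0 (j + m)
    refine (markov_ball hGm (r := 2 * t (j + m)) (by positivity) hC2.le hGe
      (by positivity)).trans ?_
    apply ENNReal.ofReal_le_ofReal
    have h1 : θ (j + m) = b * μ ^ m := by
      simp only [hθ]; congr 2; omega
    have h2 : θ (j + m) ^ p = b ^ p * (μ ^ p) ^ m := by
      rw [h1, Real.mul_rpow hb0.le (by positivity), ← Real.rpow_pow_comm hμ0.le]
    have h3 : (t (j + m)) ^ n = t (j + m) ^ β * t (j + m) ^ σ := by
      rw [← Real.rpow_add htm, ← hnb, Real.rpow_natCast]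
    have h4 : t (j + m) ^ σ = t j ^ σ * (l ^ σ) ^ m := by
      rw [htadd, Real.mul_rpow (htpos j).le (by positivity), Real.rpow_pow_comm hl0.le]
    have h5 : t j ^ σ ≤ (l ^ σ)⁻¹ * Q ^ (σ / β) := by
      have h6 := Real.rpow_le_rpow (htpos _).le (hpowQ _ (htpos _) hj2) hσ.le
      rw [htadd, Real.mul_rpow (htpos j).le (by positivity), pow_one, ← Real.rpow_mul hQ0.le,
        one_div_mul_eq_div] at h6
      rw [inv_mul_eq_div, le_div_iff₀ (by positivity)]
      exact h6
    have h7 : Q ^ ((n:ℝ) / β) = Q * Q ^ (σ / β) := by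
      rw [← Real.rpow_one_add' hQ0.le (by positivity)]
      congr 1; rw [hnb]; field_simp
    have hbp : 0 < b ^ p := by positivity
    have hmp : 0 < μ ^ p := by positivity
    have htb : 0 < t (j + m) ^ β := by positivity
    calc c2 * (omg n * (2 * t (j + m)) ^ n) * e / (θ (j + m) ^ p * t (j + m) ^ β)
        = (c2 * e) * (2 ^ n * omg n) * (t (j + m) ^ β * t (j + m) ^ σ) /
            (θ (j + m) ^ p * t (j + m) ^ β) := by rw [mul_pow, h3]; ring
      _ = 2 ^ n * omg n * Q * t j ^ σ * ν ^ m := by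
          rw [h2, h4, ← hQb, hν, div_pow]
          field_simp
      _ ≤ 2 ^ n * omg n * Q * ((l ^ σ)⁻¹ * Q ^ (σ / β)) * ν ^ m := by gcongr
      _ = _ := by rw [h7]; ring
  calc _ ≤ volume (⋃ m, S (j + m)) := measure_mono_ae hcover
    _ ≤ ∑' m, volume (S (j + m)) := measure_iUnion_le _
    _ ≤ ∑' m, ENNReal.ofReal (2 ^ n * omg n * (l ^ σ)⁻¹ * Q ^ ((n:ℝ) / β) * ν ^ m) :=
        ENNReal.tsum_le_tsum hSm
    _ = ENNReal.ofReal (∑' m, 2 ^ n * omg n * (l ^ σ)⁻¹ * Q ^ ((n:ℝ) / β) * ν ^ m) :=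
        (ENNReal.ofReal_tsum_of_nonneg (fun m => by positivity)
          ((summable_geometric_of_lt_one hν0.le hν1).mul_left _)).symm
    _ ≤ _ := by
        apply ENNReal.ofReal_le_ofReal
        rw [tsum_mul_left, tsum_geometric_of_lt_one hν0.le hν1, hC']
        have : 0 < Q ^ ((n:ℝ) / β) := by positivity
        have h2 : 2 ^ n * omg n * (l ^ σ)⁻¹ * Q ^ ((n:ℝ) / β) * (1 - ν)⁻¹ =
          2 ^ n * omg n * (l ^ σ)⁻¹ / (1 - ν) * Q ^ ((n:ℝ) / β) := by field_simp
        rw [h2]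
        gcongr
        linarith

/-- The `k`-th truncation at the dyadic levels `M 2^k`. -/
noncomputable def trunc (M : ℝ) (k : ℕ) (a : ℝ) : ℝ := min (max (a - M * 2 ^ k) 0) (M * 2 ^ k)

lemma trunc_mono {M : ℝ} (k : ℕ) : Monotone (trunc M k) := by
  intro a b h
  unfold trunc
  gcongr

lemma trunc_sum_eq {M : ℝ} (hM : 0 < M) (N : ℕ) (a : ℝ) :
    ∑ k ∈ Finset.range N, trunc M k a = min (max (a - M) 0) (M * 2 ^ N - M) := by
  induction N with
  | zero => simp
  | succ N ih =>
    rw [Finset.sum_range_succ, ih, trunc, pow_succ, ← mul_assoc]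
    have h2 : M ≤ M * 2 ^ N := le_mul_of_one_le_right hM.le (one_le_pow₀ (by norm_num))
    generalize M * 2 ^ N = x at h2
    simp only [min_def, max_def]
    split_ifs <;> linarith

lemma trunc_sum_le {M : ℝ} (hM : 0 < M) (N : ℕ) (a b : ℝ) :
    ∑ k ∈ Finset.range N, |trunc M k a - trunc M k b| ≤ |a - b| := by
  wlog h : b ≤ a generalizing a b
  · have := this b a (le_of_not_ge h)
    simp_rw [abs_sub_comm a b, abs_sub_comm (trunc M _ a)]
    exact this
  have h1 : ∀ k, |trunc M k a - trunc M k b| = trunc M k a - trunc M k b := fun k =>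
    abs_of_nonneg (sub_nonneg.2 (trunc_mono k h))
  simp_rw [h1]
  rw [Finset.sum_sub_distrib, trunc_sum_eq hM, trunc_sum_eq hM, abs_of_nonneg (sub_nonneg.2 h)]
  have := abs_min_sub_min_le_max (max (a - M) 0) (M * 2 ^ N - M) (max (b - M) 0) (M * 2 ^ N - M)
  have h3 := abs_max_sub_max_le_max (a - M) 0 (b - M) 0
  simp only [sub_self, abs_zero, abs_nonneg, sup_of_le_left, sub_sub_sub_cancel_right,
    abs_of_nonneg (sub_nonneg.2 h)] at this h3
  rw [max_eq_left (sub_nonneg.2 h)] at h3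
  exact (le_abs_self _).trans (this.trans h3)

lemma sum_rpow_le {p : ℝ} (hp : 1 ≤ p) (a : ℕ → ℝ) (ha : ∀ k, 0 ≤ a k) (N : ℕ) :
    ∑ k ∈ Finset.range N, a k ^ p ≤ (∑ k ∈ Finset.range N, a k) ^ p := by
  induction N with
  | zero => simp [Real.zero_rpow (by linarith : p ≠ 0)]
  | succ N ih =>
    rw [Finset.sum_range_succ, Finset.sum_range_succ]
    refine le_trans (by gcongr)
      (Real.add_rpow_le_rpow_add (Finset.sum_nonneg fun k _ => ha k) (ha N) hp)

lemma kernel_trunc {n : ℕ} {δ p M : ℝ} (hM : 0 < M) (hp : 1 ≤ p) (u : Eucl n → ℝ) (b : ℝ)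
    (y z : Eucl n) :
    ∑' k, fracKernel n δ p (fun x => trunc M k |u x - b|) y z ≤ fracKernel n δ p u y z := by
  apply ENNReal.tsum_le_of_sum_range_le
  intro N
  unfold fracKernel
  rw [← ENNReal.ofReal_sum_of_nonneg (fun k _ => by positivity), ← Finset.sum_div]
  apply ENNReal.ofReal_le_ofReal
  gcongr
  refine (sum_rpow_le hp _ (fun k => abs_nonneg _) N).trans ?_
  refine Real.rpow_le_rpow (Finset.sum_nonneg fun k _ => abs_nonneg _) ?_ (by linarith)
  refine (trunc_sum_le hM N _ _).trans ?_
  have := abs_abs_sub_abs_le_abs_sub (u y - b) (u z - b)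
  simpa using this

lemma measurable_trunc {n : ℕ} {u : Eucl n → ℝ} (hu : Measurable u) (M b : ℝ) (k : ℕ) :
    Measurable (fun x => trunc M k |u x - b|) := by
  unfold trunc
  fun_prop

lemma energy_trunc {n : ℕ} {δ τ p M : ℝ} (hM : 0 < M) (hp : 1 ≤ p) (D : Set (Eucl n))
    {u : Eucl n → ℝ} (hu : Measurable u) (b : ℝ) :
    ∑' k, fracEnergyTau n δ τ p D (fun x => trunc M k |u x - b|) ≤ fracEnergyTau n δ τ p D u := by
  unfold fracEnergyTau
  rw [← lintegral_tsum
    (fun k => (measurable_kernel τ δ p D (measurable_trunc hu M b k)).aemeasurable)]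
  apply lintegral_mono
  intro y
  dsimp only
  rw [← lintegral_tsum]
  · exact lintegral_mono fun z => kernel_trunc hM hp u b y z
  · intro k
    have := measurable_trunc hu M b k
    unfold fracKernel
    apply Measurable.aemeasurable
    fun_prop

lemma trunc_nonneg {M : ℝ} (hM : 0 < M) (k : ℕ) (a : ℝ) : 0 ≤ trunc M k a := by
  unfold trunc; positivity

lemma trunc_le {M : ℝ} (hM : 0 < M) (k : ℕ) {a : ℝ} (ha : 0 ≤ a) : trunc M k a ≤ a := by
  unfold trunc
  have : 0 ≤ M * 2 ^ k := by positivity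
  exact (min_le_left _ _).trans (max_le (by linarith) ha)

lemma trunc_eq {M : ℝ} (k : ℕ) {a : ℝ} (ha : 2 * (M * 2 ^ k) ≤ a) :
    trunc M k a = M * 2 ^ k := by
  unfold trunc
  exact min_eq_right (le_max_of_le_left (by linarith))

lemma dyadic_bound {M q v : ℝ} (hM : 0 < M) (hq : 0 ≤ q) (hv : 0 ≤ v) :
    ENNReal.ofReal (v ^ q) ≤ ENNReal.ofReal ((2 * M) ^ q) +
      ∑' k : ℕ, (if 2 * (M * 2 ^ k) ≤ v then ENNReal.ofReal ((4 * (M * 2 ^ k)) ^ q) else 0) := by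
  rcases lt_or_ge v (2 * M) with h | h
  · refine le_trans ?_ le_self_add
    exact ENNReal.ofReal_le_ofReal (Real.rpow_le_rpow hv h.le hq)
  · obtain ⟨k, hk1, hk2⟩ := exists_nat_pow_near (x := v / (2 * M)) (y := 2)
      (by rw [le_div_iff₀ (by positivity)]; linarith) (by norm_num)
    rw [le_div_iff₀ (by positivity)] at hk1
    rw [div_lt_iff₀ (by positivity), pow_succ] at hk2
    refine le_trans ?_ le_add_self
    refine le_trans ?_ (ENNReal.le_tsum k)
    rw [if_pos (by linarith)]
    exact ENNReal.ofReal_le_ofReal (Real.rpow_le_rpow hv (by linarith) hq)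

lemma strong_type {n : ℕ} {C₁ τ δ p : ℝ} (hC : 1 ≤ C₁)
    (hτ : τ ∈ Ioo (0:ℝ) 1) (hδ : 0 < δ) (hp : 1 ≤ p) (hβ : 0 < (n:ℝ) - δ * p) :
    ∃ C₃ : ℝ, 0 < C₃ ∧ ∀ (D : Set (Eucl n)) (L : ℝ) (x₀ : Eucl n), JohnData n D C₁ L x₀ →
      ∀ u : Eucl n → ℝ, Measurable u → LocallyIntegrable u → ∃ b : ℝ, ∀ E : ℝ, 0 < E →
        fracEnergyTau n δ τ p D u ≤ ENNReal.ofReal E →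
        ∫⁻ x in D, ENNReal.ofReal (|u x - b| ^ ((n:ℝ) * p / ((n:ℝ) - δ * p))) ≤
          ENNReal.ofReal (C₃ * E ^ ((n:ℝ) / ((n:ℝ) - δ * p))) := by
  obtain ⟨C₄, hC4, hweak⟩ := weak_type (n := n) hC hτ hδ hp hβ
  obtain ⟨κ, hκ⟩ : ∃ κ, κ = τ / (8 * C₁) := ⟨_, rfl⟩
  rw [← hκ] at hweak
  have hκ0 : 0 < κ := by rw [hκ]; have := hτ.1; positivity
  have hp0 : 0 < p := by linarith
  have hω := omg_pos n
  obtain ⟨β, hβe⟩ : ∃ β, β = (n:ℝ) - δ * p := ⟨_, rfl⟩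
  rw [← hβe] at hβ hweak ⊢
  obtain ⟨r, hr⟩ : ∃ r, r = (n:ℝ) / β := ⟨_, rfl⟩
  have hr1 : 1 ≤ r := by
    rw [hr, le_div_iff₀ hβ, hβe]; nlinarith [mul_pos hδ hp0]
  have hq : (n:ℝ) * p / β = p * r := by rw [hr]; ring
  rw [hq, ← hr]
  rw [← hr] at hweak
  have hr0 : 0 < r := by linarith
  have hC2 := C2_pos n δ p hκ0
  set c2 := C2 n δ p κ with hc2
  refine ⟨8 ^ (p * r) * omg n * c2 ^ r + C₄ * 8 ^ (p * r) * 3 ^ r, by positivity, ?_⟩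
  intro D L x₀ hJ u hu hul
  have hL := hJ.L_pos
  set b := ⨍ y in closedBall x₀ (κ * L), u y with hb
  refine ⟨b, ?_⟩
  intro E hE0 hE
  obtain ⟨θ, hθ⟩ : ∃ θ, θ = (c2 * E / L ^ β) ^ (1 / p) := ⟨_, rfl⟩
  have hLβ : 0 < L ^ β := by positivity
  have hθ0 : 0 < θ := by rw [hθ]; positivity
  have hθp : θ ^ p = c2 * E / L ^ β := by
    rw [hθ, ← Real.rpow_mul (by positivity), one_div_mul_cancel hp0.ne', Real.rpow_one]
  -- mean oscillation on the central ball
  have hB0 : ∫⁻ y in closedBall x₀ (κ * L), ENNReal.ofReal |u y - b| ≤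
      ENNReal.ofReal (2 * θ) * volume (closedBall x₀ (κ * L)) := by
    obtain ⟨γ, h0, h1, hlip, hγ⟩ := hJ.curve x₀ hJ.center_mem
    have hgeo := chain_geo hC hτ hκ hJ hlip hγ hL le_rfl le_rfl
      (by nlinarith [mul_pos hκ0 hL]) hL
    rw [h1] at hgeo
    have hkl : 0 < κ * L := by positivity
    refine poincare hδ hp hκ0 hu hul hL (by linarith) (by linarith) hgeo hθ0 ?_
    calc _ ≤ ENNReal.ofReal c2 * ENNReal.ofReal E := by
          gcongr
          refine (setLIntegral_le_lintegral _ _).trans ?_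
          rw [lintegral_eDens _ _ _ hJ.isOpen]; exact hE
      _ = ENNReal.ofReal (c2 * E) := (ENNReal.ofReal_mul hC2.le).symm
      _ ≤ _ := by
        rw [hθp, ← hβe, div_mul_cancel₀ _ hLβ.ne']
  obtain ⟨M, hM⟩ : ∃ M, M = 4 * θ := ⟨_, rfl⟩
  have hM0 : 0 < M := by rw [hM]; positivity
  set f : ℕ → Eucl n → ℝ := fun k x => trunc M k |u x - b| with hf
  have hfm : ∀ k, Measurable (f k) := fun k => measurable_trunc hu M b k
  have hfl : ∀ k, LocallyIntegrable (f k) := by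
    intro k
    have h1 : LocallyIntegrable (fun x => u x - b) volume :=
      hul.sub (locallyIntegrable_const b)
    refine h1.mono (hfm k).aestronglyMeasurable (Filter.Eventually.of_forall fun x => ?_)
    rw [Real.norm_eq_abs, Real.norm_eq_abs, abs_of_nonneg (trunc_nonneg hM0 _ _)]
    exact trunc_le hM0 _ (abs_nonneg _)
  have hfavg : ∀ k, |⨍ y in closedBall x₀ (κ * L), f k y| ≤ 2 * θ := by
    intro k
    have := poincare_avg (hfl k) (y₀ := x₀) (r := κ * L) (by positivity) (a := 0) hθ0 ?_
    · simpa using this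
    · refine le_trans (lintegral_mono fun y => ?_) hB0
      apply ENNReal.ofReal_le_ofReal
      rw [sub_zero, abs_of_nonneg (trunc_nonneg hM0 _ _)]
      exact trunc_le hM0 _ (abs_nonneg _)
  have hsumE : ∑' k, fracEnergyTau n δ τ p D (f k) ≤ ENNReal.ofReal E :=
    (energy_trunc hM0 hp D hu b).trans hE
  have hEk : ∀ k, fracEnergyTau n δ τ p D (f k) ≠ ∞ := fun k =>
    (((ENNReal.le_tsum k).trans hsumE).trans_lt ENNReal.ofReal_lt_top).ne
  set e : ℕ → ℝ := fun k => (fracEnergyTau n δ τ p D (f k)).toReal + E * (1 / 2) ^ k with he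
  have he0 : ∀ k, 0 < e k := fun k => by simp only [he]; positivity
  have hesum : ∑' k, ENNReal.ofReal (e k) ≤ ENNReal.ofReal (3 * E) := by
    have h1 : ∀ k, ENNReal.ofReal (e k) = fracEnergyTau n δ τ p D (f k) +
        ENNReal.ofReal (E * (1 / 2) ^ k) := fun k => by
      simp only [he]
      rw [ENNReal.ofReal_add (by positivity) (by positivity), ENNReal.ofReal_toReal (hEk k)]
    simp_rw [h1]
    rw [ENNReal.tsum_add, ← ENNReal.ofReal_tsum_of_nonneg (fun k => by positivity)
      (summable_geometric_two.mul_left E), tsum_mul_left, tsum_geometric_two]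
    calc _ ≤ ENNReal.ofReal E + ENNReal.ofReal (E * 2) := by gcongr
      _ = _ := by rw [← ENNReal.ofReal_add (by positivity) (by positivity)]; congr 1; ring
  have he3 : ∀ k, e k ≤ 3 * E := fun k => by
    rw [← ENNReal.ofReal_le_ofReal_iff (by positivity)]
    exact (ENNReal.le_tsum k).trans hesum
  have hlev : ∀ k, volume {x | x ∈ D ∧ 2 * (M * 2 ^ k) ≤ |u x - b|} ≤
      ENNReal.ofReal (C₄ * (e k / (M * 2 ^ k / 2) ^ p) ^ r) := by
    intro k
    refine le_trans (measure_mono ?_) (hweak D L x₀ hJ (f k) (hfm k) (hfl k) (e k) (M * 2 ^ k / 2)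
      (he0 k) (by positivity) ?_)
    · rintro x ⟨hxD, hx⟩
      refine ⟨hxD, ?_⟩
      have h1 : f k x = M * 2 ^ k := trunc_eq k hx
      rw [h1]
      have h2 := hfavg k
      have h3 := le_abs_self (⨍ y in closedBall x₀ (κ * L), f k y)
      have h4 : M ≤ M * 2 ^ k := le_mul_of_one_le_right hM0.le (one_le_pow₀ (by norm_num))
      refine le_trans ?_ (le_abs_self _)
      linarith
    · rw [← ENNReal.ofReal_toReal (hEk k)]
      apply ENNReal.ofReal_le_ofReal
      simp only [he]
      have : 0 ≤ E * (1 / 2) ^ k := by positivity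
      linarith
  have hterm : ∀ k, ENNReal.ofReal ((4 * (M * 2 ^ k)) ^ (p * r)) *
      volume {x | x ∈ D ∧ 2 * (M * 2 ^ k) ≤ |u x - b|} ≤
      ENNReal.ofReal (C₄ * 8 ^ (p * r) * (3 * E) ^ (r - 1)) * ENNReal.ofReal (e k) := by
    intro k
    refine (mul_le_mul_right (hlev k) _).trans ?_
    rw [← ENNReal.ofReal_mul (by positivity), ← ENNReal.ofReal_mul (by positivity)]
    apply ENNReal.ofReal_le_ofReal
    have hek := he0 k
    set m := M * 2 ^ k with hm
    have hm0 : 0 < m := by positivity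
    have h1 : (4 * m) ^ (p * r) = 8 ^ (p * r) * ((m / 2) ^ p) ^ r := by
      rw [← Real.rpow_mul (by positivity), ← Real.mul_rpow (by positivity) (by positivity)]
      congr 1; ring
    have h2 : e k ^ r = e k * e k ^ (r - 1) := by
      rw [← Real.rpow_one_add' hek.le (by linarith)]; congr 1; ring
    have h3 : e k ^ (r - 1) ≤ (3 * E) ^ (r - 1) :=
      Real.rpow_le_rpow hek.le (he3 k) (by linarith)
    have h4 : 0 < ((m / 2) ^ p) ^ r := by positivity
    rw [h1, Real.div_rpow hek.le (by positivity)]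
    calc 8 ^ (p * r) * ((m / 2) ^ p) ^ r * (C₄ * (e k ^ r / ((m / 2) ^ p) ^ r))
        = C₄ * 8 ^ (p * r) * e k ^ r := by field_simp
      _ = C₄ * 8 ^ (p * r) * e k ^ (r - 1) * e k := by rw [h2]; ring
      _ ≤ _ := by gcongr
  have hmeas : ∀ k : ℕ, MeasurableSet {x | 2 * (M * 2 ^ k) ≤ |u x - b|} := fun k =>
    measurableSet_le measurable_const (by fun_prop)
  have hpt : ∀ x, ENNReal.ofReal (|u x - b| ^ (p * r)) ≤ ENNReal.ofReal ((2 * M) ^ (p * r)) +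
      ∑' k : ℕ, {x | 2 * (M * 2 ^ k) ≤ |u x - b|}.indicator
        (fun _ => ENNReal.ofReal ((4 * (M * 2 ^ k)) ^ (p * r))) x := by
    intro x
    refine (dyadic_bound hM0 (by positivity) (abs_nonneg _)).trans (le_of_eq ?_)
    congr 1
  have hvD : volume D ≤ ENNReal.ofReal (omg n * L ^ n) := by
    rw [← vol_cb x₀ hL.le]; exact measure_mono hJ.subset_closedBall
  have hfirst : (2 * M) ^ (p * r) * (omg n * L ^ n) = 8 ^ (p * r) * omg n * c2 ^ r * E ^ r := by
    have h1 : (L:ℝ) ^ n = (L ^ β) ^ r := by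
      rw [← Real.rpow_mul hL.le, hr, mul_div_cancel₀ _ hβ.ne', Real.rpow_natCast]
    have h2 : (2 * M) ^ (p * r) = 8 ^ (p * r) * (θ ^ p) ^ r := by
      rw [← Real.rpow_mul hθ0.le, ← Real.mul_rpow (by positivity) (by positivity), hM]
      congr 1; ring
    have h3 : 0 < (L ^ β) ^ r := by positivity
    rw [h1, h2, hθp, Real.div_rpow (by positivity) (by positivity),
      Real.mul_rpow hC2.le hE0.le]
    field_simp
  calc ∫⁻ x in D, ENNReal.ofReal (|u x - b| ^ (p * r))
      ≤ ∫⁻ x in D, (ENNReal.ofReal ((2 * M) ^ (p * r)) +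
      ∑' k : ℕ, {x | 2 * (M * 2 ^ k) ≤ |u x - b|}.indicator
        (fun _ => ENNReal.ofReal ((4 * (M * 2 ^ k)) ^ (p * r))) x) := lintegral_mono hpt
    _ = ENNReal.ofReal ((2 * M) ^ (p * r)) * volume D +
        ∑' k : ℕ, ENNReal.ofReal ((4 * (M * 2 ^ k)) ^ (p * r)) *
          volume {x | x ∈ D ∧ 2 * (M * 2 ^ k) ≤ |u x - b|} := by
        rw [lintegral_add_left measurable_const, lintegral_tsum
          (fun k => (measurable_const.indicator (hmeas k)).aemeasurable)]
        congr 1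
        · simp
        · congr 1; ext k
          rw [lintegral_indicator_const (hmeas k), Measure.restrict_apply (hmeas k)]
          congr 2
          ext x; simp [and_comm]
    _ ≤ ENNReal.ofReal ((2 * M) ^ (p * r)) * ENNReal.ofReal (omg n * L ^ n) +
        ∑' k : ℕ, ENNReal.ofReal (C₄ * 8 ^ (p * r) * (3 * E) ^ (r - 1)) *
          ENNReal.ofReal (e k) := by
        exact add_le_add (by gcongr) (ENNReal.tsum_le_tsum hterm)
    _ ≤ ENNReal.ofReal ((2 * M) ^ (p * r)) * ENNReal.ofReal (omg n * L ^ n) +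
        ENNReal.ofReal (C₄ * 8 ^ (p * r) * (3 * E) ^ (r - 1)) * ENNReal.ofReal (3 * E) := by
        rw [ENNReal.tsum_mul_left]
        gcongr
    _ = _ := by
        rw [← ENNReal.ofReal_mul (by positivity), ← ENNReal.ofReal_mul (by positivity), hfirst,
          ← ENNReal.ofReal_add (by positivity) (by positivity)]
        congr 1
        have h5 : (3 * E) ^ (r - 1) * (3 * E) = 3 ^ r * E ^ r := by
          rw [← Real.rpow_add_one (by positivity), sub_add_cancel,
            Real.mul_rpow (by positivity) hE0.le]
        linear_combination C₄ * 8 ^ (p * r) * h5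

lemma mean_swap {n : ℕ} {D : Set (Eucl n)} (hD0 : volume D ≠ 0) (hDt : volume D ≠ ∞)
    {u : Eucl n → ℝ} (hu : Measurable u) (hui : IntegrableOn u D) {q b W : ℝ} (hq : 1 ≤ q)
    (hW : 0 < W) (h : ∫⁻ x in D, ENNReal.ofReal (|u x - b| ^ q) ≤ ENNReal.ofReal W) :
    ∫⁻ x in D, ENNReal.ofReal (|u x - ⨍ y in D, u y| ^ q) ≤
      ENNReal.ofReal (2 ^ q * (1 + 2 ^ q) * W) := by
  have hq0 : 0 < q := by linarith
  obtain ⟨V, hV⟩ : ∃ V, V = (volume D).toReal := ⟨_, rfl⟩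
  have hV0 : 0 < V := by rw [hV]; exact ENNReal.toReal_pos hD0 hDt
  have hVD : volume D = ENNReal.ofReal V := by rw [hV, ENNReal.ofReal_toReal hDt]
  obtain ⟨θ, hθ⟩ : ∃ θ, θ = (W / V) ^ (1 / q) := ⟨_, rfl⟩
  have hθ0 : 0 < θ := by rw [hθ]; positivity
  have hθp : θ ^ q = W / V := by
    rw [hθ, ← Real.rpow_mul (by positivity), one_div_mul_cancel hq0.ne', Real.rpow_one]
  set m := ⨍ y in D, u y with hm
  have hbm : |b - m| ≤ 2 * θ := by
    rw [← ENNReal.ofReal_le_ofReal_iff (by positivity)]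
    refine (ofReal_abs_sub_avg_le hD0 hDt hui b).trans ?_
    have h1 : ∫⁻ z in D, ENNReal.ofReal |b - u z| ≤
        ∫⁻ z in D, (ENNReal.ofReal θ + ENNReal.ofReal (θ ^ (1 - q)) *
          ENNReal.ofReal (|u z - b| ^ q)) := by
      apply lintegral_mono
      intro z
      dsimp only
      rw [← ENNReal.ofReal_mul (by positivity), ← ENNReal.ofReal_add hθ0.le (by positivity),
        abs_sub_comm]
      exact ENNReal.ofReal_le_ofReal (le_theta_add (abs_nonneg _) hθ0 hq)
    rw [lintegral_add_left measurable_const, lintegral_const_mul _ (by fun_prop)] at h1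
    simp only [lintegral_const, Measure.restrict_apply_univ] at h1
    have h2 : ∫⁻ z in D, ENNReal.ofReal |b - u z| ≤ ENNReal.ofReal (2 * θ * V) := by
      refine h1.trans ?_
      calc _ ≤ ENNReal.ofReal θ * volume D + ENNReal.ofReal (θ ^ (1 - q)) * ENNReal.ofReal W := by
            gcongr
        _ = _ := by
          rw [hVD, ← ENNReal.ofReal_mul (by positivity), ← ENNReal.ofReal_mul (by positivity),
            ← ENNReal.ofReal_add (by positivity) (by positivity)]
          congr 1
          have : W = θ ^ q * V := by rw [hθp]; field_simp
          rw [this, ← mul_assoc, ← Real.rpow_add hθ0]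
          simp; ring
    calc _ ≤ (volume D)⁻¹ * ENNReal.ofReal (2 * θ * V) := by gcongr
      _ = _ := by
        rw [ENNReal.ofReal_mul (p := 2 * θ) (by positivity), ← hVD, mul_comm, mul_assoc,
          ENNReal.mul_inv_cancel hD0 hDt, mul_one]
  have hpt : ∀ x, ENNReal.ofReal (|u x - m| ^ q) ≤ ENNReal.ofReal (2 ^ q) *
      ENNReal.ofReal (|u x - b| ^ q) + ENNReal.ofReal (2 ^ q * (2 * θ) ^ q) := by
    intro x
    rw [← ENNReal.ofReal_mul (by positivity), ← ENNReal.ofReal_add (by positivity) (by positivity)]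
    apply ENNReal.ofReal_le_ofReal
    have h1 : |u x - m| ≤ |u x - b| + 2 * θ := (abs_sub_le _ b _).trans (by linarith)
    have ha : 0 ≤ |u x - b| := abs_nonneg _
    rw [← Real.mul_rpow (by positivity) ha, ← Real.mul_rpow (by positivity) (by positivity)]
    rcases le_total |u x - b| (2 * θ) with h2 | h2
    · have : |u x - m| ^ q ≤ (2 * (2 * θ)) ^ q :=
        Real.rpow_le_rpow (abs_nonneg _) (by linarith) hq0.le
      have : 0 ≤ (2 * |u x - b|) ^ q := by positivity
      linarith
    · have : |u x - m| ^ q ≤ (2 * |u x - b|) ^ q :=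
        Real.rpow_le_rpow (abs_nonneg _) (by linarith) hq0.le
      have : 0 ≤ (2 * (2 * θ)) ^ q := by positivity
      linarith
  refine (lintegral_mono hpt).trans ?_
  rw [lintegral_add_right _ measurable_const, lintegral_const_mul _ (by fun_prop)]
  simp only [lintegral_const, Measure.restrict_apply_univ]
  calc _ ≤ ENNReal.ofReal (2 ^ q) * ENNReal.ofReal W +
        ENNReal.ofReal (2 ^ q * (2 * θ) ^ q) * volume D := by gcongr
    _ = _ := by
      rw [hVD, ← ENNReal.ofReal_mul (by positivity), ← ENNReal.ofReal_mul (by positivity),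
            ← ENNReal.ofReal_add (by positivity) (by positivity)]
      congr 1
      rw [Real.mul_rpow (by positivity) hθ0.le, hθp]
      field_simp

lemma final_aux (n : ℕ) (hn : 2 ≤ n) (c : ℝ) (hc : 1 ≤ c)
    (τ δ p : ℝ) (hτ : τ ∈ Ioo (0:ℝ) 1) (hδ : δ ∈ Ioo (0:ℝ) 1)
    (hp : 1 ≤ p) (hpn : p < n / δ) :
    ∃ C : ℝ, 0 < C ∧
      ∀ D : Set (Eucl n), IsJohnDomain n c D → Bornology.IsBounded D →
        ∀ u : Eucl n → ℝ, IntegrableOn u D volume →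
          (∫⁻ x in D, ENNReal.ofReal
              (|u x - ⨍ y in D, u y ∂volume| ^ ((n:ℝ) * p / ((n:ℝ) - δ * p))) ∂volume)
            ≤ ENNReal.ofReal C * fracEnergyTau n δ τ p D u ^ ((n:ℝ) / ((n:ℝ) - δ * p)) := by
  have hβ : 0 < (n:ℝ) - δ * p := by
    rw [lt_div_iff₀ hδ.1] at hpn; linarith
  have hp0 : 0 < p := by linarith
  have hn0 : (0:ℝ) < n := by positivity
  have hq1 : 1 ≤ (n:ℝ) * p / ((n:ℝ) - δ * p) := by
    rw [le_div_iff₀ hβ]; nlinarith [mul_pos hδ.1 hp0]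
  obtain ⟨C₃, hC3, hstrong⟩ := strong_type (n := n) (C₁ := 4 * c ^ 2) (by nlinarith) hτ hδ.1 hp hβ
  set q := (n:ℝ) * p / ((n:ℝ) - δ * p) with hq
  set r := (n:ℝ) / ((n:ℝ) - δ * p) with hr
  have hr0 : 0 < r := by positivity
  refine ⟨2 ^ q * (1 + 2 ^ q) * C₃, by positivity, ?_⟩
  intro D hJD hbd u hui
  obtain ⟨L, x₀, hJ⟩ := john_data (by omega) hc hJD hbd
  have hD0 : volume D ≠ 0 := (hJ.isOpen.measure_pos volume ⟨x₀, hJ.center_mem⟩).ne'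
  have hDt : volume D ≠ ∞ := hbd.measure_lt_top.ne
  have hDm := hJ.isOpen.measurableSet
  -- measurable representative
  obtain ⟨w, hw⟩ : ∃ w : Eucl n → ℝ, w = D.indicator (hui.1.mk u) := ⟨_, rfl⟩
  have hwm : Measurable w := by
    rw [hw]; exact hui.1.stronglyMeasurable_mk.measurable.indicator hDm
  have hwu : u =ᵐ[volume.restrict D] w := by
    filter_upwards [hui.1.ae_eq_mk, ae_restrict_mem hDm] with x hx hxD
    rw [hx, hw, indicator_of_mem hxD]
  have hwi : Integrable w := by
    rw [hw, integrable_indicator_iff hDm]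
    exact hui.congr hui.1.ae_eq_mk
  have havg : ⨍ y in D, u y = ⨍ y in D, w y := average_congr hwu
  have hLHS : ∫⁻ x in D, ENNReal.ofReal (|u x - ⨍ y in D, u y| ^ q) =
      ∫⁻ x in D, ENNReal.ofReal (|w x - ⨍ y in D, w y| ^ q) := by
    rw [havg]
    apply lintegral_congr_ae
    filter_upwards [hwu] with x hx
    rw [hx]
  have hEn : fracEnergyTau n δ τ p D u = fracEnergyTau n δ τ p D w := by
    unfold fracEnergyTau
    apply lintegral_congr_ae
    filter_upwards [hwu, ae_restrict_mem hDm] with y hy hyD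
    apply lintegral_congr_ae
    have := ae_restrict_of_ae_restrict_of_subset
      (tauBall_subset hτ hJ.frontier_ne hJ.ne_univ hyD) hwu
    filter_upwards [this] with z hz
    unfold fracKernel
    rw [hy, hz]
  rw [hLHS, hEn]
  obtain ⟨b, hb⟩ := hstrong D L x₀ hJ w hwm hwi.locallyIntegrable
  rcases eq_or_ne (fracEnergyTau n δ τ p D w) ∞ with htop | htop
  · rw [htop, ENNReal.top_rpow_of_pos hr0, ENNReal.mul_top]
    · exact le_top
    · simp only [ne_eq, ENNReal.ofReal_eq_zero, not_le]; positivity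
  obtain ⟨E₀, hE₀⟩ : ∃ E₀, E₀ = (fracEnergyTau n δ τ p D w).toReal := ⟨_, rfl⟩
  have hE₀n : 0 ≤ E₀ := by rw [hE₀]; exact ENNReal.toReal_nonneg
  have hEE : fracEnergyTau n δ τ p D w = ENNReal.ofReal E₀ := by
    rw [hE₀, ENNReal.ofReal_toReal htop]
  have hall : ∀ E : ℝ, E₀ < E →
      ∫⁻ x in D, ENNReal.ofReal (|w x - ⨍ y in D, w y| ^ q) ≤
        ENNReal.ofReal (2 ^ q * (1 + 2 ^ q) * C₃ * E ^ r) := by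
    intro E hE
    have hEpos : 0 < E := by linarith
    have := mean_swap hD0 hDt hwm hwi.integrableOn hq1 (by positivity)
      (hb E hEpos (by rw [hEE]; exact ENNReal.ofReal_le_ofReal hE.le))
    refine this.trans (le_of_eq ?_)
    congr 1; ring
  rw [hEE, ENNReal.ofReal_rpow_of_nonneg hE₀n hr0.le, ← ENNReal.ofReal_mul (by positivity)]
  have hcont : Continuous (fun E : ℝ => ENNReal.ofReal (2 ^ q * (1 + 2 ^ q) * C₃ * E ^ r)) :=
    ENNReal.continuous_ofReal.comp (continuous_const.mul
      (Real.continuous_rpow_const hr0.le))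
  have hlim := (hcont.tendsto E₀).mono_left (nhdsWithin_le_nhds (s := Ioi E₀))
  exact ge_of_tendsto hlim (by filter_upwards [self_mem_nhdsWithin] with E hE using hall E hE)

/-- Fractional Sobolev–Poincaré inequality in bounded John domains:
for a bounded `c`-John domain `D ⊆ ℝⁿ`, `n ≥ 2`, `τ, δ ∈ (0,1)`, `1 ≤ p < n/δ`, there
is `C = C(δ,τ,p,n,c) > 0` with
`∫_D |u - u_D|^{np/(n-δp)} ≤ C (|u|_{W^{δ,p}_τ(D)}^p)^{n/(n-δp)}` for all `u ∈ L¹(D)`. -/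
theorem statement0 (n : ℕ) (hn : 2 ≤ n) (c : ℝ) (hc : 1 ≤ c)
    (τ δ p : ℝ) (hτ : τ ∈ Ioo (0:ℝ) 1) (hδ : δ ∈ Ioo (0:ℝ) 1)
    (hp : 1 ≤ p) (hpn : p < n / δ) :
    ∃ C : ℝ, 0 < C ∧
      ∀ D : Set (Eucl n), IsJohnDomain n c D → Bornology.IsBounded D →
        ∀ u : Eucl n → ℝ, IntegrableOn u D volume →
          (∫⁻ x in D, ENNReal.ofReal
              (|u x - ⨍ y in D, u y ∂volume| ^ ((n:ℝ) * p / ((n:ℝ) - δ * p))) ∂volume)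
            ≤ ENNReal.ofReal C * fracEnergyTau n δ τ p D u ^ ((n:ℝ) / ((n:ℝ) - δ * p)) := by
  exact final_aux n hn c hc τ δ p hτ hδ hp hpn
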